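/- Let $R$ be a Noetherian ring of prime characteristic $p$, let $J \subseteq R$ be an ideal such that $R/J$ has finite projective dimension and $J$ has no embedded primes, and let $q$ be a power of $p$. Then $\operatorname{Ass}_R(R/J^{[q]}) = \operatorname{Ass}_R(R/J) = \operatorname{Min}(R/J)$; consequently, for any ideal $I$ with $J \subseteq I$, $\operatorname{Ass}(I^{[q]}/J^{[q]}) \subseteq \operatorname{Min}(R/J)$ and $H^0_{\mathfrak{p}}(I^{[q]}/J^{[q]}) = 0$ for every prime $\mathfrak{p} \notin \operatorname{Min}(R/J)$. -/

import Mathlib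

section defs

variable {R : Type*} [CommRing R]

/-- The Frobenius bracket power `K^{[q]}`. -/
def bracketPow (K : Ideal R) (q : ℕ) : Ideal R :=
  Ideal.span ((fun a => a ^ q) '' (K : Set R))

/-- For ideals `J ⊆ I`, the `R`-module `I/J`, realized as the image of `I` in `R/J`. -/
def subQuot (J I : Ideal R) : Submodule R (R ⧸ J) :=
  Submodule.map J.mkQ I

/-- The `I`-torsion submodule `Γ_I(M)` (zeroth local cohomology). -/
def gammaTorsion (I : Ideal R) (M : Type*) [AddCommGroup M] [Module R M] :
    Submodule R M where
  carrier := {z | ∃ n : ℕ, ∀ a ∈ I ^ n, a • z = 0}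
  zero_mem' := ⟨0, fun a _ => smul_zero a⟩
  add_mem' := by
    rintro x y ⟨n, hn⟩ ⟨m, hm⟩
    refine ⟨n + m, fun a ha => ?_⟩
    rw [smul_add, hn a (Ideal.pow_le_pow_right (Nat.le_add_right n m) ha),
      hm a (Ideal.pow_le_pow_right (Nat.le_add_left m n) ha), add_zero]
  smul_mem' := by
    rintro r x ⟨n, hn⟩
    exact ⟨n, fun a ha => by rw [smul_comm, hn a ha, smul_zero]⟩

/-- A module has finite projective dimension iff it admits a projective resolution
which vanishes in all sufficiently high degrees. -/
def HasFiniteProjectiveDimension (R : Type*) [CommRing R] (M : Type*) [AddCommGroup M]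
    [Module R M] : Prop :=
  ∃ (P : CategoryTheory.ProjectiveResolution (ModuleCat.of R M)) (n : ℕ),
    ∀ i : ℕ, n < i → CategoryTheory.Limits.IsZero (P.complex.X i)

end defs

universe u

section part1
open CategoryTheory Abelian IsLocalRing

variable {R : Type u} [CommRing R] [IsLocalRing R]

/-- Vanishing of `Ext^j(k, M)`. -/
def ExtZ (M : ModuleCat.{u} R) (j : ℕ) : Prop :=
  ∀ x : Ext.{u} (ModuleCat.of R (ResidueField R)) M j, x = 0

lemma ext_kill (M : ModuleCat.{u} R) (j : ℕ) (a : R) (ha : a ∈ maximalIdeal R)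
    (x : Ext.{u} (ModuleCat.of R (ResidueField R)) M j) : a • x = 0 := by
  have h0 : a • 𝟙 (ModuleCat.of R (ResidueField R)) = 0 := by
    ext y
    obtain ⟨r, rfl⟩ := IsLocalRing.residue_surjective y
    change a • residue R r = 0
    rw [Algebra.smul_def]
    have : algebraMap R (ResidueField R) a = 0 := by
      rw [ResidueField.algebraMap_eq]; exact (residue_eq_zero_iff a).2 ha
    rw [this, zero_mul]
  calc a • x = a • ((Ext.mk₀ (𝟙 _)).comp x (zero_add j)) := by rw [Ext.mk₀_id_comp]
    _ = (Ext.mk₀ (a • 𝟙 _)).comp x (zero_add j) := by rw [Ext.mk₀_smul, Ext.smul_comp]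
    _ = 0 := by rw [h0, Ext.mk₀_zero, Ext.zero_comp]

lemma ExtZ.of_retract {M N : ModuleCat.{u} R} {j : ℕ} (h : ExtZ N j) (i : M ⟶ N) (r : N ⟶ M)
    (hir : i ≫ r = 𝟙 M) : ExtZ M j := by
  intro x
  have : x = (x.comp (Ext.mk₀ i) (add_zero j)).comp (Ext.mk₀ r) (add_zero j) := by
    rw [Ext.comp_assoc_of_third_deg_zero, Ext.mk₀_comp_mk₀, hir, Ext.comp_mk₀_id]
  rw [this, h (x.comp (Ext.mk₀ i) (add_zero j)), Ext.zero_comp]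

lemma ExtZ.of_iso {M N : ModuleCat.{u} R} {j : ℕ} (h : ExtZ N j) (i : M ≅ N) : ExtZ M j :=
  h.of_retract i.hom i.inv i.hom_inv_id

/-- the maps killed by Ext(k,-) -/
noncomputable def killed (M N : ModuleCat.{u} R) (j : ℕ) : Submodule R (M ⟶ N) where
  carrier := {f | ∀ x : Ext.{u} (ModuleCat.of R (ResidueField R)) M j,
    x.comp (Ext.mk₀ f) (add_zero j) = 0}
  zero_mem' := fun x => by rw [Ext.mk₀_zero, Ext.comp_zero]
  add_mem' := fun hf hg x => by rw [Ext.mk₀_add, Ext.comp_add, hf, hg, add_zero]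
  smul_mem' := fun a f hf x => by rw [Ext.mk₀_smul, Ext.comp_smul, hf, smul_zero]

lemma smul_mem_killed (M N : ModuleCat.{u} R) (j : ℕ) (a : R) (ha : a ∈ maximalIdeal R)
    (f : M ⟶ N) : a • f ∈ killed M N j := fun x => by
  rw [Ext.mk₀_smul, Ext.comp_smul]; exact ext_kill _ _ _ ha _

lemma pi_hom_eq_sum {a b : ℕ} (g : (Fin a → R) →ₗ[R] (Fin b → R)) :
    g = ∑ i, ∑ l, (g (Pi.single i 1) l) •
      ((LinearMap.single R (fun _ : Fin b => R) l).comp (LinearMap.proj i)) := by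
  ext i l
  simp [LinearMap.sum_apply, Pi.single_apply, Finset.sum_ite_eq]

lemma killed_of_free {a b : ℕ} (g : (Fin a → R) →ₗ[R] (Fin b → R))
    (hg : ∀ v l, g v l ∈ maximalIdeal R) (j : ℕ) :
    ModuleCat.ofHom g ∈ killed (ModuleCat.of R (Fin a → R)) (ModuleCat.of R (Fin b → R)) j := by
  have : ModuleCat.ofHom g = ∑ i, ∑ l, (g (Pi.single i 1) l) • ModuleCat.ofHom
      ((LinearMap.single R (fun _ : Fin b => R) l).comp (LinearMap.proj i)) := by
    apply ModuleCat.hom_ext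
    simp only [ModuleCat.hom_sum, ModuleCat.hom_smul, ModuleCat.hom_ofHom]
    exact pi_hom_eq_sum g
  rw [this]
  exact Submodule.sum_mem _ fun i _ => Submodule.sum_mem _ fun l _ =>
    smul_mem_killed _ _ _ _ (hg _ _) _

lemma exists_retract_free (N : ModuleCat.{u} R) [Module.Finite R N] [Projective N] :
    ∃ (a : ℕ) (s : N ⟶ ModuleCat.of R (Fin a → R)) (r : ModuleCat.of R (Fin a → R) ⟶ N),
      s ≫ r = 𝟙 N := by
  obtain ⟨a, f, hf⟩ := Module.Finite.exists_fin' R N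
  have : Epi (ModuleCat.ofHom f) := (ModuleCat.epi_iff_surjective _).2 hf
  exact ⟨a, Projective.factorThru (𝟙 N) (ModuleCat.ofHom f), ModuleCat.ofHom f,
    Projective.factorThru_comp _ _⟩

lemma killed_of_projective {b : ℕ} (N : ModuleCat.{u} R) [Module.Finite R N] [Projective N]
    (f : N ⟶ ModuleCat.of R (Fin b → R)) (hf : ∀ v l, f.hom v l ∈ maximalIdeal R) (j : ℕ) :
    f ∈ killed N (ModuleCat.of R (Fin b → R)) j := by
  obtain ⟨a, s, r, hsr⟩ := exists_retract_free N
  intro x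
  have h1 : f = s ≫ ModuleCat.ofHom (f.hom.comp r.hom) := by
    have : ModuleCat.ofHom (f.hom.comp r.hom) = r ≫ f := rfl
    rw [this, ← Category.assoc, hsr, Category.id_comp]
  rw [h1, ← Ext.mk₀_comp_mk₀, ← Ext.comp_assoc_of_third_deg_zero]
  exact killed_of_free _ (fun v l => hf _ _) j _

lemma ExtZ.free {j : ℕ} (h : ExtZ (ModuleCat.of R R) j) (b : ℕ) :
    ExtZ (ModuleCat.of R (Fin b → R)) j := by
  have h1 : 𝟙 (ModuleCat.of R (Fin b → R)) ∈
      killed (ModuleCat.of R (Fin b → R)) (ModuleCat.of R (Fin b → R)) j := by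
    have : 𝟙 (ModuleCat.of R (Fin b → R)) = ∑ i : Fin b,
        ModuleCat.ofHom (LinearMap.proj (φ := fun _ : Fin b => R) (R := R) i) ≫
        ModuleCat.ofHom (LinearMap.single R (fun _ : Fin b => R) i) := by
      apply ModuleCat.hom_ext
      simp only [ModuleCat.hom_sum, ModuleCat.hom_id]
      ext i l
      simp [LinearMap.sum_apply, Pi.single_apply, Finset.sum_ite_eq]
    rw [this]
    refine Submodule.sum_mem _ fun i _ x => ?_
    rw [← Ext.mk₀_comp_mk₀, ← Ext.comp_assoc_of_third_deg_zero]
    have := h (x.comp (Ext.mk₀ (ModuleCat.ofHom (LinearMap.proj (φ := fun _ : Fin b => R) (R := R) i))) (add_zero j))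
    rw [this, Ext.zero_comp]
  intro x
  rw [← Ext.comp_mk₀_id x]
  exact h1 x

lemma ExtZ.projective {j : ℕ} (h : ExtZ (ModuleCat.of R R) j) (N : ModuleCat.{u} R)
    [Module.Finite R N] [Projective N] : ExtZ N j := by
  obtain ⟨a, s, r, hsr⟩ := exists_retract_free N
  exact (h.free a).of_retract s r hsr

lemma ExtZ.ring_of_projective {j : ℕ} (N : ModuleCat.{u} R) [Module.Finite R N] [Projective N]
    [Nontrivial N] (h : ExtZ N j) : ExtZ (ModuleCat.of R R) j := by
  have hp : Module.Projective R N := (IsProjective.iff_projective N).2 inferInstance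
  have : Module.Free R N := Module.free_of_flat_of_isLocalRing
  let b := Module.Free.chooseBasis R N
  have : Nonempty (Module.Free.ChooseBasisIndex R N) := b.index_nonempty
  let i := Classical.arbitrary (Module.Free.ChooseBasisIndex R N)
  refine h.of_retract (ModuleCat.ofHom (LinearMap.toSpanSingleton R N (b i)))
    (ModuleCat.ofHom (b.coord i)) ?_
  ext
  simp

lemma ExtZ.zero_of_mono {M N : ModuleCat.{u} R} (f : M ⟶ N) [Mono f] (h : ExtZ N 0) :
    ExtZ M 0 := fun x => by
  apply Ext.postcomp_mk₀_injective_of_mono _ f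
  simp only [map_zero]
  exact h _

lemma extZ_zero_iff (M : ModuleCat.{u} R) :
    ExtZ M 0 ↔ ∀ x : M, (∀ a ∈ maximalIdeal R, a • x = 0) → x = 0 := by
  constructor
  · intro h x hx
    let g : (R ⧸ maximalIdeal R) →ₗ[R] M := Submodule.liftQ _ (LinearMap.toSpanSingleton R M x)
      (fun a ha => by rw [LinearMap.mem_ker, LinearMap.toSpanSingleton_apply]; exact hx a ha)
    have := h (Ext.mk₀ (ModuleCat.ofHom (show ResidueField R →ₗ[R] M from g)))
    rw [Ext.mk₀_eq_zero_iff] at this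
    have h2 := congrArg (fun f => f.hom (residue R 1)) this
    have h3 : g (Submodule.Quotient.mk 1) = 0 := h2
    have h4 : (1 : R) • x = 0 := h3
    rwa [one_smul] at h4
  · intro h x
    rw [← Ext.mk₀_homEquiv₀_apply x, Ext.mk₀_eq_zero_iff]
    ext y
    apply h
    intro a ha
    rw [← map_smul]
    have : a • y = 0 := by
      obtain ⟨r, rfl⟩ := IsLocalRing.residue_surjective y
      change a • residue R r = 0
      rw [Algebra.smul_def, ResidueField.algebraMap_eq, (residue_eq_zero_iff a).2 ha, zero_mul]
    erw [this]; simp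

lemma extZ_zero_iff_ass (M : ModuleCat.{u} R) [IsNoetherianRing R] :
    ExtZ M 0 ↔ maximalIdeal R ∉ associatedPrimes R M := by
  rw [extZ_zero_iff]
  constructor
  · intro h h2
    rw [AssociatedPrimes.mem_iff, isAssociatedPrime_iff] at h2
    obtain ⟨hp, x, hx⟩ := h2
    have := h x (fun a ha => by
      rw [hx, Submodule.mem_colon_singleton, Submodule.mem_bot] at ha; exact ha)
    apply hp.ne_top
    rw [hx, this, Ideal.eq_top_iff_one, Submodule.mem_colon_singleton, smul_zero]
    exact Submodule.zero_mem _
  · intro h x hx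
    by_contra hne
    apply h
    rw [AssociatedPrimes.mem_iff, isAssociatedPrime_iff]
    refine ⟨inferInstance, x, le_antisymm ?_ (le_maximalIdeal ?_)⟩
    · intro a ha
      rw [Submodule.mem_colon_singleton, hx a ha]
      exact Submodule.zero_mem _
    · intro h1
      rw [Ideal.eq_top_iff_one, Submodule.mem_colon_singleton, one_smul, Submodule.mem_bot] at h1
      exact hne h1

lemma exists_min_cover (M : Type u) [AddCommGroup M] [Module R M] [Module.Finite R M] :
    ∃ (n : ℕ) (f : (Fin n → R) →ₗ[R] M), Function.Surjective f ∧
      ∀ v ∈ LinearMap.ker f, ∀ i, v i ∈ maximalIdeal R := by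
  classical
  have hex : ∃ n, ∃ f : (Fin n → R) →ₗ[R] M, Function.Surjective f := by
    obtain ⟨a, f, hf⟩ := Module.Finite.exists_fin' R M
    exact ⟨a, f, hf⟩
  obtain ⟨f, hf⟩ := Nat.find_spec hex
  refine ⟨_, f, hf, ?_⟩
  intro v hv i
  by_contra hi
  rw [mem_maximalIdeal, mem_nonunits_iff, not_not] at hi
  have hmin := fun m hm => Nat.find_min hex (m := m) hm
  generalize Nat.find hex = n at f hf v hv i hi hmin
  obtain _ | n := n
  · exact i.elim0
  · apply hmin n (Nat.lt_succ_self n)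
    obtain ⟨w, hw⟩ := hi
    let ι : (Fin n → R) →ₗ[R] (Fin (n+1) → R) := 
      LinearMap.pi (fun l => if h : ∃ m, i.succAbove m = l then LinearMap.proj h.choose else 0)
    have hι : ∀ z m, ι z (i.succAbove m) = z m := by
      intro z m
      have h : ∃ m', i.succAbove m' = i.succAbove m := ⟨m, rfl⟩
      simp only [ι, LinearMap.pi_apply, dif_pos h]
      have := Fin.succAbove_right_injective h.choose_spec
      simp [this]
    have hι' : ∀ z, ι z i = 0 := by
      intro z
      have h : ¬ ∃ m, i.succAbove m = i := by rintro ⟨m, hm⟩; exact Fin.succAbove_ne i m hm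
      simp only [ι, LinearMap.pi_apply, dif_neg h, LinearMap.zero_apply]
    refine ⟨f.comp ι, fun y => ?_⟩
    obtain ⟨z, rfl⟩ := hf y
    let z' := z - (z i * ↑w⁻¹) • v
    have hz' : z' i = 0 := by simp [z', ← hw, mul_assoc]
    refine ⟨fun m => z' (i.succAbove m), ?_⟩
    have : ι (fun m => z' (i.succAbove m)) = z' := by
      funext l
      obtain rfl | ⟨m, rfl⟩ := Fin.eq_self_or_eq_succAbove i l
      · rw [hι', hz']
      · rw [hι]
    rw [LinearMap.comp_apply, this]
    simp [z', LinearMap.mem_ker.1 hv]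

end part1
section part2
open CategoryTheory Abelian IsLocalRing

variable {R : Type u} [CommRing R] [IsNoetherianRing R]

lemma exists_cover (M : ModuleCat.{u} R) [Module.Finite R M] :
    ∃ S : ShortComplex (ModuleCat.{u} R), S.ShortExact ∧ S.X₃ = M ∧ Projective S.X₂ ∧
      Module.Finite R S.X₁ ∧ Module.Finite R S.X₂ := by
  obtain ⟨a, f, hf⟩ := Module.Finite.exists_fin' R M
  refine ⟨f.shortComplexKer, LinearMap.shortExact_shortComplexKer hf, rfl, ?_, ?_, ?_⟩
  · exact (IsProjective.iff_projective _).1 (inferInstanceAs (Module.Projective R (Fin a → R)))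
  · exact inferInstanceAs (Module.Finite R (LinearMap.ker f))
  · exact inferInstanceAs (Module.Finite R (Fin a → R))

lemma extZ_of_pd [IsLocalRing R] (n : ℕ) : ∀ (M : ModuleCat.{u} R) [Module.Finite R M]
    [HasProjectiveDimensionLT M (n + 1)] (j : ℕ),
    (∀ i ≤ j + n, ExtZ (ModuleCat.of R R) i) → ExtZ M j := by
  induction n with
  | zero =>
    intro M _ h j hj
    have : Projective M := projective_iff_hasProjectiveDimensionLT_one.2 h
    exact ExtZ.projective (hj j (by omega)) M
  | succ n ih =>
    intro M _ h j hj
    obtain ⟨S, hS, rfl, hP, h1, h2⟩ := exists_cover M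
    have := (hS.hasProjectiveDimensionLT_X₃_iff n hP).1 h
    intro x
    obtain ⟨y, rfl⟩ := Ext.covariant_sequence_exact₃ _ hS x (n₁ := j + 1) rfl
      (ih S.X₁ (j + 1) (fun i hi => hj i (by omega)) _)
    have hy : y = 0 := ExtZ.projective (hj j (by omega)) S.X₂ y
    rw [hy, Ext.zero_comp]

lemma ring_of_pd [IsLocalRing R] (n : ℕ) : ∀ (M : ModuleCat.{u} R) [Module.Finite R M]
    [HasProjectiveDimensionLT M (n + 1)], ¬ HasProjectiveDimensionLT M n →
    (∀ i < n, ExtZ (ModuleCat.of R R) i) ∧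
    ∀ j, (∀ i < n + j, ExtZ (ModuleCat.of R R) i) → ExtZ M j →
      ExtZ (ModuleCat.of R R) (n + j) := by
  induction n with
  | zero =>
    intro M _ h h0
    have : Projective M := projective_iff_hasProjectiveDimensionLT_one.2 h
    rw [hasProjectiveDimensionLT_zero_iff_isZero, ModuleCat.isZero_iff_subsingleton,
      not_subsingleton_iff_nontrivial] at h0
    refine ⟨fun i hi => absurd hi (Nat.not_lt_zero i), fun j _ hj => ?_⟩
    rw [zero_add]
    exact ExtZ.ring_of_projective M hj
  | succ n ih =>
    intro M _ h h0
    obtain ⟨a, f, hf, hmin⟩ := exists_min_cover (R := R) M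
    let S := f.shortComplexKer
    have hS : S.ShortExact := LinearMap.shortExact_shortComplexKer hf
    have hP : Projective S.X₂ :=
      (IsProjective.iff_projective _).1 (inferInstanceAs (Module.Projective R (Fin a → R)))
    have h1 : Module.Finite R S.X₁ := inferInstanceAs (Module.Finite R (LinearMap.ker f))
    have hN : HasProjectiveDimensionLT S.X₁ (n + 1) :=
      (hS.hasProjectiveDimensionLT_X₃_iff n hP).1 h
    have hN0 : ¬ HasProjectiveDimensionLT S.X₁ n := fun hh =>
      h0 (hS.hasProjectiveDimensionLT_X₃ n hh inferInstance)
    obtain ⟨hc, hb⟩ := ih S.X₁ hN0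
    have hkill : ∀ j, (1 ≤ n → ExtZ (ModuleCat.of R R) j) →
        ∀ x : Ext.{u} (ModuleCat.of R (ResidueField R)) S.X₁ j,
          x.comp (Ext.mk₀ S.f) (add_zero j) = 0 := by
      intro j hj x
      obtain rfl | hn := Nat.eq_zero_or_pos n
      · have : Projective S.X₁ := projective_iff_hasProjectiveDimensionLT_one.2 hN
        exact killed_of_projective S.X₁ S.f (fun v l => hmin v.1 v.2 l) j x
      · exact (hj hn).free a _
    have hRn : ExtZ (ModuleCat.of R R) n := by
      refine hb 0 hc ?_
      intro x
      have := hS.mono_f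
      apply Ext.postcomp_mk₀_injective_of_mono _ S.f
      rw [map_zero]
      exact hkill 0 (fun hn => hc 0 hn) x
    refine ⟨fun i hi => ?_, fun j hj hM => ?_⟩
    · obtain hi | rfl := Nat.lt_succ_iff_lt_or_eq.1 hi
      · exact hc i hi
      · exact hRn
    · have h3 : ExtZ S.X₁ (j + 1) := by
        intro x
        obtain ⟨y, rfl⟩ := Ext.covariant_sequence_exact₁ _ hS x
          (hkill (j + 1) (fun hn => hj _ (by omega)) x) rfl
        have hy : y = 0 := hM y
        rw [hy, Ext.zero_comp]
      have := hb (j + 1) (fun i hi => hj i (by omega)) h3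
      rwa [show n + 1 + j = n + (j + 1) by omega]

/-- comparison: if pd N ≤ pd M and the socle of `N` is nonzero, so is that of `M`. -/
lemma socle_compare [IsLocalRing R] (M N : ModuleCat.{u} R) [Module.Finite R M]
    [Module.Finite R N] (n : ℕ) [HasProjectiveDimensionLT M (n + 1)]
    (hMN : ∀ m, HasProjectiveDimensionLT M m → HasProjectiveDimensionLT N m)
    (hM : ExtZ M 0) : ExtZ N 0 := by
  classical
  have hex : ∃ m, HasProjectiveDimensionLT M m := ⟨_, ‹_›⟩
  have h1 := Nat.find_spec hex
  have h2 := fun m hm => Nat.find_min hex (m := m) hm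
  generalize Nat.find hex = m at h1 h2
  obtain _ | m := m
  · have := hMN _ h1
    intro x
    have h := isZero_of_hasProjectiveDimensionLT_zero N
    rw [← Ext.mk₀_homEquiv₀_apply x, Ext.mk₀_eq_zero_iff]
    exact h.eq_of_tgt _ _
  · obtain ⟨hc, hb⟩ := ring_of_pd m M (h2 m (Nat.lt_succ_self m))
    have := hMN _ h1
    have h3 := hb 0 hc hM
    apply extZ_of_pd m N 0
    intro i hi
    obtain hi | rfl := (Nat.le_iff_lt_or_eq.1 hi)
    · exact hc i (by omega)
    · rw [zero_add]; exact h3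

end part2
section part3
open CategoryTheory Abelian IsLocalRing TensorProduct Limits

variable {R S : Type u} [CommRing R] [CommRing S]

lemma ext_projective (f : R →+* S) (M : ModuleCat.{u} R) [hM : Projective M] :
    Projective ((ModuleCat.extendScalars.{u, u, u} f).obj M) :=
  (ModuleCat.extendRestrictScalarsAdj.{u, u, u} f).map_projective M hM

lemma ext_finite (f : R →+* S) (M : ModuleCat.{u} R) [Module.Finite R M] :
    Module.Finite S ((ModuleCat.extendScalars.{u, u, u} f).obj M) := by
  algebraize [f]
  exact inferInstanceAs (Module.Finite S (S ⊗[R] M))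

instance ext_additive (f : R →+* S) : (ModuleCat.extendScalars.{u, u, u} f).Additive :=
  (ModuleCat.extendRestrictScalarsAdj.{u, u, u} f).left_adjoint_additive

lemma ext_shortExact (f : R →+* S) (T : ShortComplex (ModuleCat.{u} R)) (hT : T.ShortExact)
    (h : Mono ((ModuleCat.extendScalars.{u, u, u} f).map T.f)) :
    (T.map (ModuleCat.extendScalars.{u, u, u} f)).ShortExact := by
  have h0 : PreservesFiniteColimits (ModuleCat.extendScalars.{u, u, u} f) := inferInstance
  have h1 := (Functor.preservesFiniteColimits_tfae (ModuleCat.extendScalars.{u, u, u} f)).out 3 0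
  have := h1.mp h0 T hT
  exact { exact := this.1, mono_f := h, epi_g := this.2 }

lemma ext_mono_of_flat (f : R →+* S) (hf : f.Flat) {M N : ModuleCat.{u} R} (g : M ⟶ N) [Mono g] :
    Mono ((ModuleCat.extendScalars.{u, u, u} f).map g) := by
  have := ModuleCat.preservesFiniteLimits_extendScalars_of_flat hf
  infer_instance

lemma ext_pd_of_flat (f : R →+* S) (hf : f.Flat) (n : ℕ) : ∀ (M : ModuleCat.{u} R),
    HasProjectiveDimensionLT M n →
    HasProjectiveDimensionLT ((ModuleCat.extendScalars.{u, u, u} f).obj M) n := by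
  obtain _ | n := n
  · intro M h
    rw [hasProjectiveDimensionLT_zero_iff_isZero] at h ⊢
    exact Functor.map_isZero _ h
  induction n with
  | zero =>
    intro M h
    have h := projective_iff_hasProjectiveDimensionLT_one.2 h
    exact projective_iff_hasProjectiveDimensionLT_one.1 (ext_projective f M)
  | succ n ih =>
    intro M h
    let T := M.projectiveShortComplex
    have hT : T.ShortExact := M.shortExact_projectiveShortComplex
    have hP : Projective T.X₂ := (IsProjective.iff_projective _).1
      (inferInstanceAs (Module.Projective R M.projectiveShortComplex.X₂))
    have h1 := ih _ ((hT.hasProjectiveDimensionLT_X₃_iff n hP).1 h)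
    have := hT.mono_f
    have hT' := ext_shortExact f T hT (ext_mono_of_flat f hf _)
    exact (hT'.hasProjectiveDimensionLT_X₃_iff n (ext_projective f T.X₂)).2 h1

lemma ext_equiv (f : R →+* S) [A : Algebra R S] (hf : algebraMap R S = f) (M : ModuleCat.{u} R) :
    Nonempty ((S ⊗[R] M) ≃ₗ[S] ((ModuleCat.extendScalars.{u, u, u} f).obj M)) := by
  have : A = f.toAlgebra := Algebra.algebra_ext _ _ fun r => by rw [hf]; rfl
  subst this
  let _ := f.toAlgebra
  exact ⟨{ toFun := fun x => x, invFun := fun x => x, map_add' := fun _ _ => rfl,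
           map_smul' := fun _ _ => rfl, left_inv := fun _ => rfl, right_inv := fun _ => rfl}⟩

lemma ass_loc (P : Ideal R) [P.IsPrime] (H : ModuleCat.{u} R) [IsNoetherianRing R] :
    P ∈ associatedPrimes R H ↔ ¬ ExtZ ((ModuleCat.extendScalars.{u, u, u}
      (algebraMap R (Localization.AtPrime P))).obj H) 0 := by
  obtain ⟨e⟩ := ext_equiv (algebraMap R (Localization.AtPrime P)) rfl H
  have : IsNoetherianRing (Localization.AtPrime P) :=
    IsLocalization.isNoetherianRing P.primeCompl _ inferInstance
  rw [extZ_zero_iff_ass, not_not, ← LinearEquiv.AssociatedPrimes.eq e]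
  have : IsLocalizedModule P.primeCompl (TensorProduct.mk R (Localization.AtPrime P) H 1) :=
    (isLocalizedModule_iff_isBaseChange P.primeCompl (Localization.AtPrime P) _).2
      (TensorProduct.isBaseChange R H (Localization.AtPrime P))
  rw [← Module.associatedPrimes.preimage_comap_associatedPrimes_eq_associatedPrimes_of_isLocalizedModule
    P.primeCompl (Localization.AtPrime P) (TensorProduct.mk R (Localization.AtPrime P) H 1),
    Set.mem_preimage]
  have : Ideal.comap (algebraMap R (Localization.AtPrime P)) (maximalIdeal (Localization.AtPrime P)) = P :=
    Localization.AtPrime.under_maximalIdeal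
  rw [this]

lemma flat_loc (P : Ideal R) [P.IsPrime] : (algebraMap R (Localization.AtPrime P)).Flat := by
  rw [RingHom.flat_algebraMap_iff]
  exact IsLocalization.flat _ P.primeCompl

lemma charP_loc (p : ℕ) (hp : p.Prime) [CharP R p] (P : Ideal R) [P.IsPrime] :
    CharP (Localization.AtPrime P) p := by
  rw [CharP.charP_iff_prime_eq_zero hp]
  have : ((p : R) : R) = 0 := CharP.cast_eq_zero R p
  have := congrArg (algebraMap R (Localization.AtPrime P)) this
  rwa [map_natCast, map_zero] at this

/-- Frobenius commutes with base change. -/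
noncomputable def frobIso (f : R →+* S) (p e : ℕ) [ExpChar R p] [ExpChar S p] :
    ModuleCat.extendScalars.{u, u, u} (iterateFrobenius R p e) ⋙ ModuleCat.extendScalars.{u, u, u} f ≅
    ModuleCat.extendScalars.{u, u, u} f ⋙ ModuleCat.extendScalars.{u, u, u} (iterateFrobenius S p e) :=
  (ModuleCat.extendScalarsComp _ _).symm ≪≫ eqToIso (by
    congr 1
    ext x
    simp [iterateFrobenius_def]) ≪≫ ModuleCat.extendScalarsComp _ _

end part3
section part4
open CategoryTheory Abelian IsLocalRing TensorProduct Limits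

lemma frob_split {R S : Type u} [CommRing R] [CommRing S] (f : R →+* S)
    (T : ShortComplex (ModuleCat.{u} R)) (hT : T.ShortExact) (h : Projective T.X₃) :
    Mono ((ModuleCat.extendScalars.{u, u, u} f).map T.f) := by
  have := hT.splittingOfProjective.isSplitMono_f
  infer_instance

lemma mono_of_natIso {R S : Type u} [CommRing R] [CommRing S]
    {A B : ModuleCat.{u} R ⥤ ModuleCat.{u} S} (α : A ≅ B) {X Y : ModuleCat.{u} R} (f : X ⟶ Y)
    (h : Mono (B.map f)) : Mono (A.map f) := by
  have hi : Mono (α.hom.app X) := @IsIso.mono_of_iso _ _ _ _ _ (Iso.isIso_hom (α.app X))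
  have h1 : Mono (α.hom.app X ≫ B.map f) := @mono_comp _ _ _ _ _ _ hi _ h
  rw [← α.hom.naturality f] at h1
  exact mono_of_mono _ (α.hom.app Y)

lemma ps_main (p e : ℕ) (hp : p.Prime) (n : ℕ) :
    ∀ (R : Type u) [CommRing R] [IsNoetherianRing R] [CharP R p] [ExpChar R p],
    (∀ T : ShortComplex (ModuleCat.{u} R), T.ShortExact → Projective T.X₂ →
      Module.Finite R T.X₂ → HasProjectiveDimensionLT T.X₃ (n + 1) →
      Mono ((ModuleCat.extendScalars.{u, u, u} (iterateFrobenius R p e)).map T.f)) ∧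
    (∀ M : ModuleCat.{u} R, Module.Finite R M → HasProjectiveDimensionLT M (n + 1) →
      HasProjectiveDimensionLT
        ((ModuleCat.extendScalars.{u, u, u} (iterateFrobenius R p e)).obj M) (n + 1)) := by
  induction n with
  | zero =>
    intro R _ _ _ _
    refine ⟨fun T hT _ _ h => ?_, fun M _ h => ?_⟩
    · exact frob_split _ T hT (projective_iff_hasProjectiveDimensionLT_one.2 h)
    · have h := projective_iff_hasProjectiveDimensionLT_one.2 h
      exact projective_iff_hasProjectiveDimensionLT_one.1 (ext_projective _ M)
  | succ n ih =>
    intro R _ _ _ _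
    have key : ∀ T : ShortComplex (ModuleCat.{u} R), T.ShortExact → Projective T.X₂ →
      Module.Finite R T.X₂ → HasProjectiveDimensionLT T.X₃ (n + 1 + 1) →
      Mono ((ModuleCat.extendScalars.{u, u, u} (iterateFrobenius R p e)).map T.f) := by
      intro T hT hP hfin hpd
      have hm := hT.mono_f
      have hfin1 : Module.Finite R T.X₁ :=
        Module.Finite.of_injective T.f.hom ((ModuleCat.mono_iff_injective _).1 hm)
      have hfin3 : Module.Finite R T.X₃ :=
        Module.Finite.of_surjective T.g.hom ((ModuleCat.epi_iff_surjective _).1 hT.epi_g)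
      have hpd1 := (hT.hasProjectiveDimensionLT_X₃_iff n hP).1 hpd
      set F := ModuleCat.extendScalars.{u, u, u} (iterateFrobenius R p e) with hF
      by_contra hmono
      let H : ModuleCat.{u} R := kernel (F.map T.f)
      have hH : Nontrivial H := by
        by_contra hH
        rw [not_nontrivial_iff_subsingleton] at hH
        exact hmono (Preadditive.mono_of_isZero_kernel _ (ModuleCat.isZero_of_subsingleton H))
      obtain ⟨P, hPH⟩ := associatedPrimes.nonempty R H
      have hPp : P.IsPrime := hPH.isPrime
      rw [ass_loc] at hPH
      apply hPH
      have := charP_loc p hp P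
      have : ExpChar (Localization.AtPrime P) p := ExpChar.prime hp
      have : IsNoetherianRing (Localization.AtPrime P) :=
        IsLocalization.isNoetherianRing P.primeCompl _ inferInstance
      set L := ModuleCat.extendScalars.{u, u, u} (algebraMap R (Localization.AtPrime P)) with hL
      let α := frobIso (algebraMap R (Localization.AtPrime P)) p e
      have hflat := flat_loc P
      have hk : Mono (L.map (kernel.ι (F.map T.f))) := ext_mono_of_flat _ hflat _
      have hTL : (T.map L).ShortExact := ext_shortExact _ T hT (ext_mono_of_flat _ hflat _)
      have hfL1 : Module.Finite (Localization.AtPrime P) (L.obj T.X₁) := ext_finite _ _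
      have hfL2 : Module.Finite (Localization.AtPrime P) (L.obj T.X₂) := ext_finite _ _
      have hfL3 : Module.Finite (Localization.AtPrime P) (L.obj T.X₃) := ext_finite _ _
      by_cases hc : HasProjectiveDimensionLT (L.obj T.X₃) (n + 1)
      · have h1 := (ih (Localization.AtPrime P)).1 (T.map L) hTL (ext_projective _ _) hfL2 hc
        have h2 : Mono (L.map (F.map T.f)) := by
          exact mono_of_natIso α T.f h1
        have h0 : L.map (kernel.ι (F.map T.f)) = 0 := by
          rw [← cancel_mono (L.map (F.map T.f)), ← L.map_comp, kernel.condition, zero_comp,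
            L.map_zero]
        have hz : IsZero (L.obj H) := by
          rw [IsZero.iff_id_eq_zero, ← cancel_mono (L.map (kernel.ι (F.map T.f))), h0]
          simp
        intro x
        obtain ⟨y, rfl⟩ := (Ext.homEquiv₀ (X := _) (Y := _)).symm.surjective x
        rw [hz.eq_of_tgt y 0]
        simp
      · have hpdL : HasProjectiveDimensionLT (L.obj T.X₃) (n + 1 + 1) :=
          ext_pd_of_flat _ hflat _ _ hpd
        have hpdL1 : HasProjectiveDimensionLT (L.obj T.X₁) (n + 1) :=
          ext_pd_of_flat _ hflat _ _ hpd1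
        have hr := (ring_of_pd (n + 1) (L.obj T.X₃) hc).1
        have h1 := (ih (Localization.AtPrime P)).2 (L.obj T.X₁) hfL1 hpdL1
        have hfF := ext_finite (iterateFrobenius (Localization.AtPrime P) p e) (L.obj T.X₁)
        have h2 := extZ_of_pd n ((ModuleCat.extendScalars.{u, u, u}
            (iterateFrobenius (Localization.AtPrime P) p e)).obj (L.obj T.X₁)) 0
            (fun i hi => hr i (by omega))
        exact ExtZ.zero_of_mono (L.map (kernel.ι (F.map T.f))) (h2.of_iso (α.app T.X₁))
    refine ⟨key, fun M _ h => ?_⟩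
    obtain ⟨T, hT, rfl, hP, h1, h2⟩ := exists_cover M
    have h3 := (ih R).2 T.X₁ h1 ((hT.hasProjectiveDimensionLT_X₃_iff n hP).1 h)
    have hT' := ext_shortExact (iterateFrobenius R p e) T hT (key T hT hP h2 h)
    exact (hT'.hasProjectiveDimensionLT_X₃_iff n (ext_projective _ T.X₂)).2 h3

lemma ps_pd (p e : ℕ) (hp : p.Prime) (R : Type u) [CommRing R] [IsNoetherianRing R] [CharP R p]
    [ExpChar R p] (M : ModuleCat.{u} R) [hM : Module.Finite R M] (m : ℕ)
    (h : HasProjectiveDimensionLT M m) : HasProjectiveDimensionLT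
        ((ModuleCat.extendScalars.{u, u, u} (iterateFrobenius R p e)).obj M) m := by
  obtain _ | n := m
  · rw [hasProjectiveDimensionLT_zero_iff_isZero] at h ⊢
    exact Functor.map_isZero _ h
  · exact (ps_main p e hp n R).2 M hM h

lemma pd_of_res {R : Type u} [CommRing R] (M : ModuleCat.{u} R) (P : ProjectiveResolution M)
    (n : ℕ) (h : ∀ i, n < i → IsZero (P.complex.X i)) : HasProjectiveDimensionLT M (n + 1) := by
  refine HasProjectiveDimensionLT.mk fun i hi Y x => ?_
  obtain ⟨f, hf, rfl⟩ := P.extMk_surjective x (i + 1) rfl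
  obtain rfl : f = 0 := (h i hi).eq_of_src _ _
  exact P.extMk_zero _ _

lemma ass_frob (p e : ℕ) (hp : p.Prime) (R : Type u) [CommRing R] [IsNoetherianRing R] [CharP R p]
    [ExpChar R p] (M : ModuleCat.{u} R) [hM : Module.Finite R M] (n : ℕ)
    (h : HasProjectiveDimensionLT M (n + 1)) :
    associatedPrimes R ((ModuleCat.extendScalars.{u, u, u} (iterateFrobenius R p e)).obj M) ⊆
      associatedPrimes R M := by
  intro P hP
  have hPp : P.IsPrime := hP.isPrime
  rw [ass_loc] at hP ⊢
  intro h0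
  apply hP
  have := charP_loc p hp P
  have : ExpChar (Localization.AtPrime P) p := ExpChar.prime hp
  have : IsNoetherianRing (Localization.AtPrime P) :=
    IsLocalization.isNoetherianRing P.primeCompl _ inferInstance
  have hf1 := ext_finite (algebraMap R (Localization.AtPrime P)) M
  have hf2 := ext_finite (iterateFrobenius (Localization.AtPrime P) p e)
    ((ModuleCat.extendScalars.{u, u, u} (algebraMap R (Localization.AtPrime P))).obj M)
  have hpd := ext_pd_of_flat _ (flat_loc P) _ _ h
  have := socle_compare _ _ n (fun m hm => ps_pd p e hp _ _ m hm) h0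
  exact this.of_iso ((frobIso (algebraMap R (Localization.AtPrime P)) p e).app M)

lemma ext_quot {R S : Type u} [CommRing R] [CommRing S] (f : R →+* S) (J : Ideal R) :
    Nonempty ((S ⧸ J.map f) ≃ₗ[S] ((ModuleCat.extendScalars.{u, u, u} f).obj
      (ModuleCat.of R (R ⧸ J)))) := by
  let _ := f.toAlgebra
  obtain ⟨a⟩ := ext_equiv f rfl (ModuleCat.of R (R ⧸ J))
  let b : (S ⧸ J.map f) ≃ₗ[S] S ⊗[R] (R ⧸ J) := Algebra.TensorProduct.quotIdealMapEquivTensorQuotAux S J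
  exact ⟨b.trans a⟩

lemma bracket_eq {R : Type u} [CommRing R] (p e : ℕ) [ExpChar R p] (J : Ideal R) :
    bracketPow J (p ^ e) = J.map (iterateFrobenius R p e) := rfl

lemma bracket_le_radical {R : Type u} [CommRing R] (J : Ideal R) (q : ℕ) (hq : q ≠ 0) :
    (bracketPow J q).radical = J.radical := by
  apply le_antisymm
  · rw [Ideal.radical_le_radical_iff]
    refine Ideal.span_le.2 ?_
    rintro _ ⟨a, ha, rfl⟩
    exact Ideal.le_radical (Ideal.pow_mem_of_mem J ha q (Nat.pos_of_ne_zero hq))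
  · rw [Ideal.radical_le_radical_iff]
    intro a ha
    exact ⟨q, Ideal.subset_span ⟨a, ha, rfl⟩⟩

lemma bracket_ass {R : Type u} [CommRing R] [IsNoetherianRing R] (p e : ℕ) (hp : p.Prime)
    [CharP R p] (J : Ideal R) (hproj : HasFiniteProjectiveDimension R (R ⧸ J))
    (hnoemb : associatedPrimes R (R ⧸ J) = J.minimalPrimes) :
    associatedPrimes R (R ⧸ bracketPow J (p ^ e)) = J.minimalPrimes := by
  have : ExpChar R p := ExpChar.prime hp
  apply subset_antisymm
  · rw [← hnoemb, bracket_eq]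
    obtain ⟨b⟩ := ext_quot (iterateFrobenius R p e) J
    rw [LinearEquiv.AssociatedPrimes.eq b]
    obtain ⟨P, n, h⟩ := hproj
    have hfin : Module.Finite R (ModuleCat.of R (R ⧸ J)) :=
      inferInstanceAs (Module.Finite R (R ⧸ J))
    exact ass_frob p e hp R (ModuleCat.of R (R ⧸ J)) n (pd_of_res _ P n h)
  · have h1 := Module.associatedPrimes.minimalPrimes_annihilator_subset_associatedPrimes R
      (R ⧸ bracketPow J (p ^ e))
    rw [Ideal.annihilator_quotient, ← Ideal.radical_minimalPrimes, bracket_le_radical _ _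
      (pow_ne_zero _ hp.ne_zero), Ideal.radical_minimalPrimes] at h1
    exact h1

lemma gamma_aux {R : Type u} [CommRing R] [IsNoetherianRing R] (M : Type u) [AddCommGroup M]
    [Module R M] (P : Ideal R) [P.IsPrime] (hP : P ∉ associatedPrimes R M) :
    gammaTorsion (maximalIdeal (Localization.AtPrime P)) (LocalizedModule P.primeCompl M) = ⊥ := by
  classical
  rw [eq_bot_iff]
  rintro z ⟨n, hn⟩
  rw [Submodule.mem_bot]
  by_contra hz
  apply hP
  have key : ∀ n : ℕ, ∀ z : LocalizedModule P.primeCompl M, z ≠ 0 →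
      (∀ a ∈ maximalIdeal (Localization.AtPrime P) ^ n, a • z = 0) →
      ∃ w : LocalizedModule P.primeCompl M, w ≠ 0 ∧
        ∀ a ∈ maximalIdeal (Localization.AtPrime P), a • w = 0 := by
    intro n
    induction n with
    | zero =>
      intro z hz h
      exact absurd (by simpa using h 1 (by simp)) hz
    | succ n ih =>
      intro z hz h
      by_cases hc : ∀ a ∈ maximalIdeal (Localization.AtPrime P), a • z = 0
      · exact ⟨z, hz, hc⟩
      · push Not at hc
        obtain ⟨a, ha, haz⟩ := hc
        refine ih (a • z) haz fun b hb => ?_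
        rw [smul_smul]
        exact h _ (by rw [pow_succ]; exact Ideal.mul_mem_mul hb ha)
  obtain ⟨w, hw, hk⟩ := key n z hz hn
  have hass : maximalIdeal (Localization.AtPrime P) ∈
      associatedPrimes (Localization.AtPrime P) (LocalizedModule P.primeCompl M) := by
    rw [AssociatedPrimes.mem_iff, isAssociatedPrime_iff]
    refine ⟨inferInstance, w, le_antisymm ?_ (le_maximalIdeal ?_)⟩
    · intro a ha
      rw [Submodule.mem_colon_singleton, hk a ha]
      exact Submodule.zero_mem _
    · intro h1
      rw [Ideal.eq_top_iff_one, Submodule.mem_colon_singleton, one_smul, Submodule.mem_bot] at h1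
      exact hw h1
  rw [← Module.associatedPrimes.preimage_comap_associatedPrimes_eq_associatedPrimes_of_isLocalizedModule
    P.primeCompl (Localization.AtPrime P) (LocalizedModule.mkLinearMap P.primeCompl M),
    Set.mem_preimage] at hass
  have : Ideal.comap (algebraMap R (Localization.AtPrime P))
    (maximalIdeal (Localization.AtPrime P)) = P := Localization.AtPrime.under_maximalIdeal
  rwa [this] at hass

end part4

theorem stmt17 (R : Type*) [CommRing R] [IsNoetherianRing R]
    (p : ℕ) (hp : p.Prime) [CharP R p]
    (J : Ideal R)
    (hproj : HasFiniteProjectiveDimension R (R ⧸ J))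
    (hnoemb : associatedPrimes R (R ⧸ J) = J.minimalPrimes)
    (q : ℕ) (hq : ∃ e : ℕ, q = p ^ e) :
    associatedPrimes R (R ⧸ bracketPow J q) = J.minimalPrimes ∧
    ∀ I : Ideal R, J ≤ I →
      associatedPrimes R ↥(subQuot (bracketPow J q) (bracketPow I q)) ⊆
        J.minimalPrimes ∧
      ∀ (𝔭 : Ideal R) [𝔭.IsPrime], 𝔭 ∉ J.minimalPrimes →
        gammaTorsion (IsLocalRing.maximalIdeal (Localization.AtPrime 𝔭))
          (LocalizedModule 𝔭.primeCompl
            ↥(subQuot (bracketPow J q) (bracketPow I q))) = ⊥ := by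
  obtain ⟨e, rfl⟩ := hq
  have h1 := bracket_ass p e hp J hproj hnoemb
  refine ⟨h1, fun I _ => ?_⟩
  have h2 : associatedPrimes R ↥(subQuot (bracketPow J (p ^ e)) (bracketPow I (p ^ e))) ⊆
        J.minimalPrimes := by
    rw [← h1]
    exact associatedPrimes.subset_of_injective (f := Submodule.subtype _)
      (Submodule.subtype_injective _)
  exact ⟨h2, fun P _ hP => gamma_aux _ P fun h => hP (h2 h)⟩
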